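/- Let G be a connected d-regular graph, let v be a vertex with deg₂(v) = 2 and N₂'(v) = {u}, and let G_v be the vertex set of the connected component of G − u containing v. Then |G_v| = d + 2, and |G_v \ N(u)| is even and at least 4 (equivalently, |N(u) ∩ G_v| ≤ d − 2 and has the same parity as d). -/

import Mathlib

open SimpleGraph

variable {V : Type*}

/-- The set of vertices at distance exactly `i` from `v`. -/
def distSet (G : SimpleGraph V) (v : V) (i : ℕ) : Set V := {u | G.dist v u = i}

/-- `deg₂ v` : the number of vertices at distance exactly 2 from `v`. -/
noncomputable def deg2 (G : SimpleGraph V) (v : V) : ℕ := (distSet G v 2).ncard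

/-- `N₂'(v)` : vertices at distance 2 from `v` that are adjacent to a vertex at
distance 3 from `v`. -/
def N2' (G : SimpleGraph V) (v : V) : Set V :=
  {u | G.dist v u = 2 ∧ ∃ w, G.dist v w = 3 ∧ G.Adj u w}

/-- The square of `G` : an edge between `u` and `v` whenever `1 ≤ d(u,v) ≤ 2`. -/
def graphSquare (G : SimpleGraph V) : SimpleGraph V where
  Adj u v := 1 ≤ G.dist u v ∧ G.dist u v ≤ 2
  symm := by
    constructor
    intro u v h
    rwa [SimpleGraph.dist_comm]
  loopless := by
    constructor
    intro v h
    simp [SimpleGraph.dist_self] at h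

/-- `G` is `d`-regular : every vertex has exactly `d` neighbors. -/
def IsRegularGraph (G : SimpleGraph V) (d : ℕ) : Prop :=
  ∀ v, (G.neighborSet v).ncard = d

/-- The vertex set of the connected component of `G - u` containing `v` :
all vertices reachable from `v` by a walk avoiding `u`. -/
def compDel (G : SimpleGraph V) (u v : V) : Set V :=
  {w | ∃ p : G.Walk v w, u ∉ p.support}

/-!
At distance `2` from `v` only `u` has a neighbor at distance `3`, so deleting `u` cuts the component
of `v` down to `C`, the closed ball of radius `2` around `v` (`G.ball v 3`, as `ball` is open)
without `u`, which has `(1 + d + deg₂(v)) - 1` vertices. Every edge leaving `C` ends at `u`,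
so the degree sum `d * |C|` over `C` counts the edges inside `C` twice and the edges from `C` to `u`
once; this fixes the parity of `|C ∩ N(u)|`. The neighbor of `u` at distance `3` from `v` lies
outside `C`, so `|C ∩ N(u)| < d`, and parity improves the resulting lower bound on `|C \ N(u)|` by
one.
-/

section Ball

variable {G : SimpleGraph V} {v w : V} {r : ℕ}

theorem mem_ball_add_one_iff :
    w ∈ G.ball v (r + 1) ↔ G.Reachable v w ∧ G.dist v w ≤ r := by
  rw [mem_ball_comm, mem_ball, ENat.lt_add_one_iff (ENat.natCast_ne_top r)]
  constructor
  · intro h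
    have hvw : G.Reachable v w :=
      reachable_of_edist_ne_top (ne_top_of_le_ne_top (ENat.natCast_ne_top r) h)
    rw [← hvw.coe_dist_eq_edist] at h
    exact ⟨hvw, by exact_mod_cast h⟩
  · rintro ⟨hvw, h⟩
    rw [← hvw.coe_dist_eq_edist]
    exact_mod_cast h

theorem ball_add_one_eq_union_distSet (hr : r ≠ 0) :
    G.ball v (r + 1) = G.ball v r ∪ distSet G v r := by
  obtain ⟨s, rfl⟩ := Nat.exists_eq_succ_of_ne_zero hr
  ext w
  have hreach : G.dist v w = s + 1 → G.Reachable v w := fun h =>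
    .of_dist_ne_zero (by omega)
  rw [Set.mem_union, mem_ball_add_one_iff, Nat.cast_succ, mem_ball_add_one_iff]
  change _ ↔ _ ∨ G.dist v w = s + 1
  grind

theorem finite_ball (hfin : ∀ x, (G.neighborSet x).Finite) (v : V) (r : ℕ) :
    (G.ball v r).Finite := by
  induction r generalizing v with
  | zero => simp
  | succ r ih =>
    refine (((hfin v).biUnion fun x _ => ih x).insert v).subset fun w hw => ?_
    rw [Nat.cast_succ, mem_ball_add_one_iff] at hw
    obtain ⟨p, hp⟩ := hw.1.exists_walk_length_eq_dist
    cases p with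
    | nil => exact Set.mem_insert v _
    | @cons _ x _ hvx q =>
      have hq : q.length + 1 ≤ r := by rw [← Walk.length_cons hvx, hp]; exact hw.2
      refine Set.mem_insert_of_mem v (Set.mem_biUnion hvx ?_)
      rw [mem_ball_comm, mem_ball]
      exact (edist_le q).trans_lt (by exact_mod_cast hq)

theorem ncard_ball_three (hfin : ∀ x, (G.neighborSet x).Finite) (v : V) :
    (G.ball v 3).ncard = (G.neighborSet v).ncard + 1 + deg2 G v := by
  have hball : G.ball v 3 = G.ball v 2 ∪ distSet G v 2 :=
    ball_add_one_eq_union_distSet two_ne_zero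
  have hfinite : (G.ball v 3).Finite := finite_ball hfin v 3
  have hdisj : Disjoint (G.ball v 2) (distSet G v 2) := by
    refine Set.disjoint_left.2 fun w hw (hw2 : G.dist v w = 2) => ?_
    have hw1 : G.dist v w ≤ 1 := (mem_ball_add_one_iff.1 hw).2
    omega
  rw [hball] at hfinite ⊢
  rw [Set.ncard_union_eq hdisj (hfinite.subset Set.subset_union_left)
      (hfinite.subset Set.subset_union_right), ball_two,
    Set.ncard_insert_of_notMem G.notMem_neighborSet_self (hfin v), deg2]

end Ball

section CompDel

variable {G : SimpleGraph V} {u v w x : V}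

theorem self_notMem_compDel : u ∉ compDel G u v :=
  fun ⟨p, hp⟩ => hp p.end_mem_support

theorem mem_compDel_of_adj (hw : w ∈ compDel G u v) (hwx : G.Adj w x) (hx : x ≠ u) :
    x ∈ compDel G u v := by
  obtain ⟨p, hp⟩ := hw
  exact ⟨p.concat hwx, by simp [Walk.support_concat, hp, hx.symm]⟩

theorem neighborSet_subset_insert_compDel (hw : w ∈ compDel G u v) :
    G.neighborSet w ⊆ insert u (compDel G u v) :=
  fun _ hwx => or_iff_not_imp_left.2 (mem_compDel_of_adj hw hwx)

theorem compDel_subset {S : Set V} (hv : v ≠ u → v ∈ S)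
    (hS : ∀ a ∈ S, ∀ b, G.Adj a b → b ≠ u → b ∈ S) : compDel G u v ⊆ S := by
  rintro w ⟨p, hp⟩
  induction p with
  | nil => exact hv (by simpa [eq_comm] using hp)
  | cons hab q ih =>
    rw [Walk.support_cons, List.mem_cons, not_or] at hp
    exact ih (hS _ (hv (Ne.symm hp.1)) _ hab) hp.2

theorem mem_compDel_of_dist_le (hvw : G.Reachable v w) (hwu : w ≠ u)
    (hle : G.dist v w ≤ G.dist v u) : w ∈ compDel G u v := by
  classical
  obtain ⟨p, hp⟩ := hvw.exists_walk_length_eq_dist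
  -- a geodesic that passes through `u` before reaching its end is longer than `d(v, u)`
  refine ⟨p, fun hu => ?_⟩
  have hlt : (p.takeUntil u hu).length < p.length := p.length_takeUntil_lt_length hu hwu.symm
  have hdist : G.dist v u ≤ (p.takeUntil u hu).length := dist_le _
  omega

theorem compDel_eq_ball_sdiff_singleton
    (hcut : ∀ a b, G.Adj a b → G.dist v a = G.dist v u → G.dist v b = G.dist v u + 1 → a = u) :
    compDel G u v = G.ball v (G.dist v u + 1) \ {u} := by
  refine Set.Subset.antisymm (compDel_subset (fun hvu => ⟨?_, hvu⟩) ?_) ?_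
  · exact mem_ball_self (by simp)
  · rintro a ⟨ha, hau⟩ b hab hbu
    rw [mem_ball_add_one_iff] at ha
    refine ⟨mem_ball_add_one_iff.2 ⟨ha.1.trans hab.reachable, ?_⟩, hbu⟩
    have hstep : G.dist v b ≤ G.dist v a + 1 := by
      simpa [dist_eq_one_iff_adj.2 hab] using ha.1.dist_triangle_left b
    by_contra! hlt
    exact hau (hcut a b hab (by omega) (by omega))
  · rintro w ⟨hw, hwu⟩
    rw [mem_ball_add_one_iff] at hw
    exact mem_compDel_of_dist_le hw.1 hwu hw.2

end CompDel

section DegreeSum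

variable {G : SimpleGraph V} {u : V}

theorem degree_induce_eq_ncard (S : Set V) (a : S) [Fintype ((G.induce S).neighborSet a)] :
    (G.induce S).degree a = (S ∩ G.neighborSet a).ncard := by
  rw [← Subtype.image_preimage_coe, Set.ncard_image_of_injective _ Subtype.val_injective,
    ← card_neighborSet_eq_degree, ← Nat.card_eq_fintype_card]
  rfl

theorem ncard_neighborSet_of_subset_insert {S : Set V} {a : V} (hS : S.Finite) (hu : u ∉ S)
    (ha : G.neighborSet a ⊆ insert u S) [Decidable (G.Adj u a)] :
    (G.neighborSet a).ncard = (S ∩ G.neighborSet a).ncard + if G.Adj u a then 1 else 0 := by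
  split_ifs with hua
  · have hinsert : G.neighborSet a = insert u (S ∩ G.neighborSet a) := by
      rw [Set.insert_inter_distrib, Set.insert_eq_of_mem (show u ∈ G.neighborSet a from hua.symm),
        Set.inter_eq_right.2 ha]
    conv_lhs => rw [hinsert]
    exact Set.ncard_insert_of_notMem (fun h => hu h.1) (hS.inter_of_left _)
  · have hsub : G.neighborSet a ⊆ S :=
      (Set.subset_insert_iff_of_notMem fun h => hua (G.adj_symm h)).1 ha
    rw [Set.inter_eq_right.2 hsub, add_zero]

theorem sum_ncard_neighborSet_of_subset_insert {S : Finset V} (hu : u ∉ S)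
    (hS : ∀ a ∈ S, G.neighborSet a ⊆ insert u (S : Set V)) :
    ∑ a ∈ S, (G.neighborSet a).ncard =
      2 * (G.induce (S : Set V)).edgeSet.ncard + ((S : Set V) ∩ G.neighborSet u).ncard := by
  classical
  have hinside : ∑ a ∈ S, ((S : Set V) ∩ G.neighborSet a).ncard =
      2 * (G.induce (S : Set V)).edgeSet.ncard := by
    rw [← Finset.sum_coe_sort, ← coe_edgeFinset, Set.ncard_coe_finset,
      ← sum_degrees_eq_twice_card_edges]
    exact Finset.sum_congr rfl fun a _ => (degree_induce_eq_ncard (S : Set V) a).symm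
  have htoU : ∑ a ∈ S, (if G.Adj u a then 1 else 0) = ((S : Set V) ∩ G.neighborSet u).ncard := by
    rw [← Finset.card_filter, ← Set.ncard_coe_finset, Finset.coe_filter]
    rfl
  rw [← hinside, ← htoU, ← Finset.sum_add_distrib]
  exact Finset.sum_congr rfl fun a ha =>
    ncard_neighborSet_of_subset_insert S.finite_toSet hu (hS a ha)

end DegreeSum

section UniqueExit

variable {G : SimpleGraph V} {d : ℕ} {u v : V}

theorem compDel_eq_ball_three_sdiff_singleton (hN : N2' G v = {u}) :
    compDel G u v = G.ball v 3 \ {u} := by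
  have hu : G.dist v u = 2 := (hN.superset rfl).1
  have hcut : ∀ a b, G.Adj a b → G.dist v a = G.dist v u → G.dist v b = G.dist v u + 1 → a = u := by
    intro a b hab ha hb
    rw [hu] at ha hb
    exact hN.subset ⟨ha, b, hb, hab⟩
  have hball := compDel_eq_ball_sdiff_singleton hcut
  rw [hu] at hball
  exact hball

theorem ncard_compDel (hfin : ∀ x, (G.neighborSet x).Finite) (hN : N2' G v = {u}) :
    (compDel G u v).ncard = (G.neighborSet v).ncard + deg2 G v := by
  have hu : G.dist v u = 2 := (hN.superset rfl).1
  have hmem : u ∈ G.ball v 3 :=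
    mem_ball_add_one_iff.2 ⟨.of_dist_ne_zero (by omega), hu.le⟩
  rw [compDel_eq_ball_three_sdiff_singleton hN, Set.ncard_sdiff_singleton_of_mem hmem,
    ncard_ball_three hfin]
  omega

theorem finite_compDel (hfin : ∀ x, (G.neighborSet x).Finite) (hN : N2' G v = {u}) :
    (compDel G u v).Finite := by
  rw [compDel_eq_ball_three_sdiff_singleton hN]
  exact (finite_ball hfin v 3).sdiff

theorem ncard_compDel_inter_neighborSet_lt (hfin : (G.neighborSet u).Finite)
    (hN : N2' G v = {u}) :
    (compDel G u v ∩ G.neighborSet u).ncard < (G.neighborSet u).ncard := by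
  obtain ⟨-, y, hy, huy⟩ : u ∈ N2' G v := hN.superset rfl
  refine Set.ncard_lt_ncard ⟨Set.inter_subset_right, fun hsub => ?_⟩ hfin
  have hyC : y ∈ compDel G u v := (hsub huy).1
  rw [compDel_eq_ball_three_sdiff_singleton hN] at hyC
  have hy2 : G.dist v y ≤ 2 := (mem_ball_add_one_iff.1 hyC.1).2
  omega

theorem ncard_compDel_mul (hreg : IsRegularGraph G d) (hfinite : (compDel G u v).Finite) :
    (compDel G u v).ncard * d =
      2 * (G.induce (compDel G u v)).edgeSet.ncard +
        (compDel G u v ∩ G.neighborSet u).ncard := by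
  obtain ⟨S, hS⟩ := hfinite.exists_finset_coe
  have hclosed : ∀ a ∈ S, G.neighborSet a ⊆ insert u (S : Set V) := fun a ha =>
    hS ▸ neighborSet_subset_insert_compDel (hS.subset ha)
  have hu : u ∉ S := fun h => self_notMem_compDel (hS.subset h)
  rw [← hS, Set.ncard_coe_finset, ← sum_ncard_neighborSet_of_subset_insert hu hclosed,
    Finset.sum_congr rfl fun a _ => hreg a, Finset.sum_const, smul_eq_mul]

theorem even_ncard_compDel_sdiff_neighborSet (hfin : ∀ x, (G.neighborSet x).Finite)
    (hreg : IsRegularGraph G d) (hv : Even (deg2 G v)) (hN : N2' G v = {u}) :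
    Even (compDel G u v \ G.neighborSet u).ncard := by
  have hfinite := finite_compDel hfin hN
  have hcard := ncard_compDel hfin hN
  rw [hreg v] at hcard
  have hsum := ncard_compDel_mul hreg hfinite
  have hinter : Even (compDel G u v ∩ G.neighborSet u).ncard ↔ Even d := by
    have hparity := congrArg Even hsum
    rw [hcard] at hparity
    simpa [Nat.even_add, Nat.even_mul, hv] using hparity.symm
  have hsplit := Set.ncard_inter_add_ncard_sdiff_eq_ncard (compDel G u v) (G.neighborSet u) hfinite
  have hparity := congrArg Even (hsplit.trans hcard)
  rw [Nat.even_add, Nat.even_add, hinter] at hparity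
  tauto

end UniqueExit

theorem stmt12_general {V : Type*} (G : SimpleGraph V) (d : ℕ)
    (hfin : ∀ x, (G.neighborSet x).Finite) (hreg : IsRegularGraph G d)
    (v u : V) (hv : Even (deg2 G v)) (hN : N2' G v = {u}) :
    (compDel G u v).ncard = d + deg2 G v ∧
      Even ((compDel G u v \ G.neighborSet u).ncard) ∧
      deg2 G v + 2 ≤ (compDel G u v \ G.neighborSet u).ncard := by
  have hcard : (compDel G u v).ncard = d + deg2 G v := hreg v ▸ ncard_compDel hfin hN
  have heven := even_ncard_compDel_sdiff_neighborSet hfin hreg hv hN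
  refine ⟨hcard, heven, ?_⟩
  have hlt : (compDel G u v ∩ G.neighborSet u).ncard < d :=
    hreg u ▸ ncard_compDel_inter_neighborSet_lt (hfin u) hN
  have hsplit := Set.ncard_inter_add_ncard_sdiff_eq_ncard (compDel G u v) (G.neighborSet u)
    (finite_compDel hfin hN)
  obtain ⟨k, hk⟩ := hv
  obtain ⟨m, hm⟩ := heven
  omega

/-- Let `G` be connected `d`-regular, `v` a vertex with `deg₂(v) = 2`
and `N₂'(v) = {u}`, and `G_v` the component of `G - u` containing `v`. Then
`|G_v| = d + 2`, and `|G_v \ N(u)|` is even and at least 4. -/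
theorem stmt12 {V : Type*} [Fintype V] (G : SimpleGraph V) (d : ℕ)
    (hconn : G.Connected) (hreg : IsRegularGraph G d)
    (v u : V) (hv : deg2 G v = 2) (hN : N2' G v = {u}) :
    (compDel G u v).ncard = d + 2 ∧
      Even ((compDel G u v \ G.neighborSet u).ncard) ∧
      4 ≤ (compDel G u v \ G.neighborSet u).ncard := by
  simpa only [hv] using
    stmt12_general G d (fun _ => Set.toFinite _) hreg v u (hv ▸ even_two) hN
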